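/- Let U ⊆ ℝ^m be an open set, let (g^{μν}) be a constant symmetric real m×m matrix, let A_μ : U → M_n(ℝ) (μ = 1,…,m) be continuously differentiable, and let f : U → M_n(ℝ) be twice continuously differentiable with f(x) invertible for every x. Let h : M_n(ℝ) × M_n(ℝ) → ℝ be a bilinear form which is invariant under conjugation by the values of f, i.e. h(f(x)·X·f(x)⁻¹, f(x)·Y·f(x)⁻¹) = h(X, Y) for all x ∈ U and X, Y ∈ M_n(ℝ). Define F_{μν} := ∂_μ A_ν − ∂_ν A_μ + [A_μ, A_ν], Ã_μ := f⁻¹ ∂_μ f + f⁻¹ A_μ f, and F̃_{μν} := ∂_μ Ã_ν − ∂_ν Ã_μ + [Ã_μ, Ã_ν]. Then the Yang–Mills Lagrangian density is gauge invariant: Σ_{a,b,c,d} g^{ac} g^{bd} h(F̃_{ab}(x), F̃_{cd}(x)) = Σ_{a,b,c,d} g^{ac} g^{bd} h(F_{ab}(x), F_{cd}(x)) for every x ∈ U. -/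

import Mathlib

/-!
Conjugation invariance of `h` reduces the claim to the covariance of the curvature,
`f F̃_{μν} = F_{μν} f` on `U`. To obtain it without ever differentiating `f⁻¹` explicitly,
rewrite the gauge transformation as `f Ã_ν = ∂_ν f + A_ν f` and differentiate this identity:
`∂_μ f Ã_ν + f ∂_μ Ã_ν = ∂_μ ∂_ν f + ∂_μ A_ν f + A_ν ∂_μ f` (`gauge_pderiv`).
Antisymmetrizing in `μ, ν` removes the second derivatives of `f`, and the remaining terms
match by the gauge identity itself and noncommutative algebra.
-/

noncomputable instance (n : ℕ) : NormedRing (Matrix (Fin n) (Fin n) ℝ) :=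
  Matrix.linftyOpNormedRing

noncomputable instance (n : ℕ) : NormedAlgebra ℝ (Matrix (Fin n) (Fin n) ℝ) :=
  Matrix.linftyOpNormedAlgebra

/-- Partial derivative in the `μ`-th coordinate direction of a matrix-valued map on `ℝ^m`. -/
noncomputable def pderiv' {m n : ℕ} (μ : Fin m)
    (A : (Fin m → ℝ) → Matrix (Fin n) (Fin n) ℝ) (x : Fin m → ℝ) :
    Matrix (Fin n) (Fin n) ℝ :=
  fderiv ℝ A x (Pi.single μ 1)

theorem pderiv'_mul {m n : ℕ} (μ : Fin m) {A B : (Fin m → ℝ) → Matrix (Fin n) (Fin n) ℝ}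
    {x : Fin m → ℝ} (hA : DifferentiableAt ℝ A x) (hB : DifferentiableAt ℝ B x) :
    pderiv' μ (fun y => A y * B y) x = pderiv' μ A x * B x + A x * pderiv' μ B x := by
  -- `fderiv` elaborates with the product topology on matrices, which agrees with the norm
  -- topology only up to unfolding, so the calculus rules are applied as terms here and below.
  refine (DFunLike.congr_fun (fderiv_fun_mul' hA hB) (Pi.single μ 1)).trans ?_
  exact add_comm _ _

theorem pderiv'_add {m n : ℕ} (μ : Fin m) {A B : (Fin m → ℝ) → Matrix (Fin n) (Fin n) ℝ}
    {x : Fin m → ℝ} (hA : DifferentiableAt ℝ A x) (hB : DifferentiableAt ℝ B x) :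
    pderiv' μ (fun y => A y + B y) x = pderiv' μ A x + pderiv' μ B x := by
  exact DFunLike.congr_fun (fderiv_fun_add hA hB) (Pi.single μ 1)

theorem differentiableAt_pderiv' {m n : ℕ} (μ : Fin m)
    {f : (Fin m → ℝ) → Matrix (Fin n) (Fin n) ℝ} {x : Fin m → ℝ} (hf : ContDiffAt ℝ 2 f x) :
    DifferentiableAt ℝ (pderiv' μ f) x := by
  have h1 : DifferentiableAt ℝ (fderiv ℝ f) x :=
    (hf.fderiv_right (m := 1) (by norm_num)).differentiableAt (by norm_num)
  exact h1.clm_apply (differentiableAt_const _)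

theorem pderiv'_comm {m n : ℕ} (μ ν : Fin m)
    {f : (Fin m → ℝ) → Matrix (Fin n) (Fin n) ℝ} {x : Fin m → ℝ} (hf : ContDiffAt ℝ 2 f x) :
    pderiv' μ (pderiv' ν f) x = pderiv' ν (pderiv' μ f) x := by
  have h1 : DifferentiableAt ℝ (fderiv ℝ f) x :=
    (hf.fderiv_right (m := 1) (by norm_num)).differentiableAt (by norm_num)
  have key : ∀ α β : Fin m, pderiv' α (pderiv' β f) x
      = fderiv ℝ (fderiv ℝ f) x (Pi.single α 1) (Pi.single β 1) := by
    intro α β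
    change fderiv ℝ (fun y => fderiv ℝ f y (Pi.single β 1)) x (Pi.single α 1) = _
    refine (DFunLike.congr_fun (fderiv_clm_apply h1
      (differentiableAt_const (Pi.single β (1 : ℝ)))) (Pi.single α 1)).trans ?_
    simp only [fderiv_fun_const, Pi.zero_apply]
    exact (congrArg (· + _) (map_zero (fderiv ℝ f x))).trans (zero_add _)
  rw [key, key]
  exact (hf.isSymmSndFDerivAt (by simp)).eq _ _

theorem differentiableAt_matrix_inv {m n : ℕ}
    {f : (Fin m → ℝ) → Matrix (Fin n) (Fin n) ℝ} {x : Fin m → ℝ}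
    (hf : DifferentiableAt ℝ f x) (hu : IsUnit (f x)) :
    DifferentiableAt ℝ (fun y => (f y)⁻¹) x := by
  have : CompleteSpace (Matrix (Fin n) (Fin n) ℝ) := FiniteDimensional.complete ℝ _
  simp only [Matrix.nonsing_inv_eq_ringInverse]
  obtain ⟨u, hu⟩ := hu
  have h1 := differentiableAt_inverse (𝕜 := ℝ) u.isUnit
  rw [hu] at h1
  exact h1.comp x hf

/-- The derivative of the gauge identity `f B = ∂_ν f + A f`. -/
theorem gauge_pderiv {m n : ℕ} (μ ν : Fin m)
    {f A B : (Fin m → ℝ) → Matrix (Fin n) (Fin n) ℝ} {x : Fin m → ℝ}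
    (hf : ContDiffAt ℝ 2 f x) (hA : DifferentiableAt ℝ A x) (hB : DifferentiableAt ℝ B x)
    (hgauge : ∀ᶠ y in nhds x, f y * B y = pderiv' ν f y + A y * f y) :
    pderiv' μ f x * B x + f x * pderiv' μ B x
      = pderiv' μ (pderiv' ν f) x + (pderiv' μ A x * f x + A x * pderiv' μ f x) := by
  have hfd : DifferentiableAt ℝ f x := hf.differentiableAt (by norm_num)
  have hE : pderiv' μ (fun y => f y * B y) x
      = pderiv' μ (fun y => pderiv' ν f y + A y * f y) x := by
    unfold pderiv' at hgauge ⊢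
    rw [Filter.EventuallyEq.fderiv_eq hgauge]
  rwa [pderiv'_mul μ hfd hB, pderiv'_add μ (differentiableAt_pderiv' ν hf) (hA.fun_mul hfd),
    pderiv'_mul μ hA hfd] at hE

/-- Gauge invariance of the Yang–Mills Lagrangian density: for a conjugation-invariant
bilinear form `h`, `Σ g^{ac} g^{bd} h(F̃_{ab}, F̃_{cd}) = Σ g^{ac} g^{bd} h(F_{ab}, F_{cd})`,
where `F̃` is the curvature of the gauge transform `Ã_μ = f⁻¹ ∂_μ f + f⁻¹ A_μ f`. -/
theorem yang_mills_lagrangian_gauge_invariant {m n : ℕ} (U : Set (Fin m → ℝ)) (hU : IsOpen U)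
    (G : Matrix (Fin m) (Fin m) ℝ) (hGsymm : ∀ μ ν, G μ ν = G ν μ)
    (A : Fin m → (Fin m → ℝ) → Matrix (Fin n) (Fin n) ℝ)
    (hA : ∀ μ, ContDiffOn ℝ 1 (A μ) U)
    (f : (Fin m → ℝ) → Matrix (Fin n) (Fin n) ℝ)
    (hf : ContDiffOn ℝ 2 f U)
    (hinv : ∀ x ∈ U, IsUnit (f x))
    (h : Matrix (Fin n) (Fin n) ℝ →ₗ[ℝ] Matrix (Fin n) (Fin n) ℝ →ₗ[ℝ] ℝ)
    (hconj : ∀ x ∈ U, ∀ X Y : Matrix (Fin n) (Fin n) ℝ,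
      h (f x * X * (f x)⁻¹) (f x * Y * (f x)⁻¹) = h X Y)
    (F Ftil : Fin m → Fin m → (Fin m → ℝ) → Matrix (Fin n) (Fin n) ℝ)
    (hF : ∀ μ ν x, F μ ν x =
      pderiv' μ (A ν) x - pderiv' ν (A μ) x + (A μ x * A ν x - A ν x * A μ x))
    (Atil : Fin m → (Fin m → ℝ) → Matrix (Fin n) (Fin n) ℝ)
    (hAtil : ∀ μ x, Atil μ x = (f x)⁻¹ * pderiv' μ f x + (f x)⁻¹ * A μ x * f x)
    (hFtil : ∀ μ ν x, Ftil μ ν x =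
      pderiv' μ (Atil ν) x - pderiv' ν (Atil μ) x
        + (Atil μ x * Atil ν x - Atil ν x * Atil μ x)) :
    ∀ x ∈ U,
      ∑ a : Fin m, ∑ b : Fin m, ∑ c : Fin m, ∑ d : Fin m,
          G a c * G b d * h (Ftil a b x) (Ftil c d x)
        = ∑ a : Fin m, ∑ b : Fin m, ∑ c : Fin m, ∑ d : Fin m,
          G a c * G b d * h (F a b x) (F c d x) := by
  intro x hx
  have hU' : U ∈ nhds x := hU.mem_nhds hx
  have hfx : ContDiffAt ℝ 2 f x := hf.contDiffAt hU'
  have hfd : DifferentiableAt ℝ f x := hfx.differentiableAt (by norm_num)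
  have hAd : ∀ μ, DifferentiableAt ℝ (A μ) x := fun μ =>
    ((hA μ).contDiffAt hU').differentiableAt (by norm_num)
  have hdet : ∀ y ∈ U, IsUnit (f y).det := fun y hy =>
    (Matrix.isUnit_iff_isUnit_det _).1 (hinv y hy)
  have hgauge : ∀ μ, ∀ y ∈ U, f y * Atil μ y = pderiv' μ f y + A μ y * f y := by
    intro μ y hy
    rw [hAtil, mul_add, Matrix.mul_assoc (f y)⁻¹,
      Matrix.mul_nonsing_inv_cancel_left _ _ (hdet y hy),
      Matrix.mul_nonsing_inv_cancel_left _ _ (hdet y hy)]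
  have hBd : ∀ μ, DifferentiableAt ℝ (Atil μ) x := by
    intro μ
    have hi := differentiableAt_matrix_inv hfd (hinv x hx)
    rw [funext (hAtil μ)]
    exact (hi.mul (differentiableAt_pderiv' μ hfx)).add ((hi.mul (hAd μ)).mul hfd)
  have hcov : ∀ μ ν, f x * Ftil μ ν x = F μ ν x * f x := by
    intro μ ν
    have d1 := gauge_pderiv μ ν hfx (hAd ν) (hBd ν)
      (Filter.mem_of_superset hU' (hgauge ν))
    have d2 := gauge_pderiv ν μ hfx (hAd μ) (hBd μ)
      (Filter.mem_of_superset hU' (hgauge μ))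
    rw [pderiv'_comm ν μ hfx] at d2
    have gμ := hgauge μ x hx
    have gν := hgauge ν x hx
    rw [hFtil, hF]
    -- Expand `f Ã_μ Ã_ν` by moving `f` to the right through both factors.
    have e1 : f x * (Atil μ x * Atil ν x)
        = pderiv' μ f x * Atil ν x + A μ x * (pderiv' ν f x + A ν x * f x) := by
      rw [← mul_assoc, gμ, add_mul, mul_assoc, gν]
    have e2 : f x * (Atil ν x * Atil μ x)
        = pderiv' ν f x * Atil μ x + A ν x * (pderiv' μ f x + A μ x * f x) := by
      rw [← mul_assoc, gν, add_mul, mul_assoc, gμ]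
    rw [mul_add, mul_sub, mul_sub, e1, e2, eq_sub_of_add_eq' d1, eq_sub_of_add_eq' d2]
    noncomm_ring
  have hFeq : ∀ μ ν, F μ ν x = f x * Ftil μ ν x * (f x)⁻¹ := by
    intro μ ν
    rw [hcov, Matrix.mul_nonsing_inv_cancel_right _ _ (hdet x hx)]
  simp only [hFeq, hconj x hx]
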